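/- arXiv:math/0609644 — 2 statements merged into one kernel-verified Lean document; each statement's English description precedes it below -/
import Mathlib

section
/- For every n ≥ 2, the number of transversals π of Y_n that avoid (312) in Y_n but contain (312) as a classical pattern (i.e. there exist positions i_1 < i_2 < i_3 with π(i_2) < π(i_3) < π(i_1)) equals c_n − 2c_{n−1}. -/
/-!
A transversal of `Y_n` is a permutation that does not end in its least value `0`, and it avoids
`312` in `Y_n` exactly when each of its classical occurrences of `312` uses both the value `0`
(as the lowest entry) and the last column (`isTransversal_iff`, `not_containsIn_iff`).

Write such a permutation in one-line notation as `A 0 B v`. Since no `(a, 0, b)` with `a` in `A` and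
`b` in `B` is a `312`, `A < B` letter by letter. Some occurrence of `312` exists, so some letter of
`A` exceeds `v`; hence `A v < B` as well. So `A v` is a `312`-avoiding arrangement of
`1, …, i + 1` not ending in its maximum, and `B` is an arbitrary `312`-avoiding arrangement of the
`j` remaining letters, with `i + j = n - 2`. Conversely every such pair glues to a permutation of
the required kind (`isTarget_iff`).

The same decomposition `A s B` around the least letter shows that `312`-avoiders are counted by the
Catalan numbers (`card_avoiders`), and those of length `i + 1` ending in their maximum by `c_i`.
The count is therefore the sum of `(c_{i+1} - c_i) c_j` over `i + j = n - 2`, which Segner's recurrence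
evaluates to `(c_n - c_{n-1}) - c_{n-1}` (`sum_catalan`).
-/

open Equiv

/-- `π` is a transversal of the Young diagram with row lengths `b` (zero-indexed:
the row at height `h` has `b h` cells, i.e. column `i` (1-indexed `i+1`) lies in that row
iff `(i:ℕ)+1 ≤ b h`). -/
def IsTransversal {n : ℕ} (b : Fin n → ℕ) (π : Equiv.Perm (Fin n)) : Prop :=
  ∀ i : Fin n, (i : ℕ) + 1 ≤ b (π i)

/-- The transversal `π` contains the pattern `τ` inside the Young diagram `b`:
there are columns `f 0 < f 1 < …` whose dots are in the relative order prescribed by `τ`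
and all rows and columns through these dots intersect inside the diagram. -/
def ContainsIn {n k : ℕ} (b : Fin n → ℕ) (π : Equiv.Perm (Fin n))
    (τ : Equiv.Perm (Fin k)) : Prop :=
  ∃ f : Fin k → Fin n, StrictMono f ∧
    (∀ s t : Fin k, τ s < τ t ↔ π (f s) < π (f t)) ∧
    (∀ s t : Fin k, (f s : ℕ) + 1 ≤ b (π (f t)))

/-- `|S_Y(τ)|`: the number of transversals of the Young diagram `b` avoiding `τ` in `Y`. -/
noncomputable def SYcard {n k : ℕ} (b : Fin n → ℕ) (τ : Equiv.Perm (Fin k)) : ℕ :=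
  Nat.card {π : Equiv.Perm (Fin n) // IsTransversal b π ∧ ¬ ContainsIn b π τ}

/-- Classical pattern containment for permutations. -/
def ContainsPat {n k : ℕ} (π : Equiv.Perm (Fin n)) (τ : Equiv.Perm (Fin k)) : Prop :=
  ∃ f : Fin k → Fin n, StrictMono f ∧ ∀ s t : Fin k, τ s < τ t ↔ π (f s) < π (f t)

/-- `|S_n(τ)|`: the number of permutations of length `n` avoiding `τ`. -/
noncomputable def SnCard (n : ℕ) {k : ℕ} (τ : Equiv.Perm (Fin k)) : ℕ :=
  Nat.card {π : Equiv.Perm (Fin n) // ¬ ContainsPat π τ}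

def p123 : Equiv.Perm (Fin 3) := Equiv.refl _
def p213 : Equiv.Perm (Fin 3) :=
  ⟨![1, 0, 2], ![1, 0, 2], by intro x; fin_cases x <;> rfl, by intro x; fin_cases x <;> rfl⟩
def p312 : Equiv.Perm (Fin 3) :=
  ⟨![2, 0, 1], ![1, 2, 0], by intro x; fin_cases x <;> rfl, by intro x; fin_cases x <;> rfl⟩
def p321 : Equiv.Perm (Fin 3) :=
  ⟨![2, 1, 0], ![2, 1, 0], by intro x; fin_cases x <;> rfl, by intro x; fin_cases x <;> rfl⟩

/-- `(σ|τ)`: the block sum with the block of `σ` before and entirely above the block of `τ`. -/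
def blockSum {m k : ℕ} (σ : Equiv.Perm (Fin m)) (τ : Equiv.Perm (Fin k)) :
    Equiv.Perm (Fin (m + k)) :=
  finSumFinEquiv.symm.trans ((((Equiv.sumCongr σ τ).trans
    (Equiv.sumComm (Fin m) (Fin k))).trans finSumFinEquiv).trans
    (finCongr (Nat.add_comm k m)))

/-- `|S_{↘Y}(τ)|`: avoiders whose two leftmost entries are decreasing. -/
noncomputable def SYcardLeftDesc {m k : ℕ} (b : Fin m → ℕ) (τ : Equiv.Perm (Fin k)) : ℕ :=
  Nat.card {π : Equiv.Perm (Fin m) // IsTransversal b π ∧ ¬ ContainsIn b π τ ∧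
    ∀ i j : Fin m, (i : ℕ) = 0 → (j : ℕ) = 1 → π j < π i}

/-- `|S_{↗Y}(τ)|`: avoiders whose two leftmost entries are increasing. -/
noncomputable def SYcardLeftAsc {m k : ℕ} (b : Fin m → ℕ) (τ : Equiv.Perm (Fin k)) : ℕ :=
  Nat.card {π : Equiv.Perm (Fin m) // IsTransversal b π ∧ ¬ ContainsIn b π τ ∧
    ∀ i j : Fin m, (i : ℕ) = 0 → (j : ℕ) = 1 → π i < π j}

/-- `|S^{↘}_Y(τ)|`: avoiders in which the value `m` occurs to the left of the value `m-1`. -/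
noncomputable def SYcardTopDesc {m k : ℕ} (b : Fin m → ℕ) (τ : Equiv.Perm (Fin k)) : ℕ :=
  Nat.card {π : Equiv.Perm (Fin m) // IsTransversal b π ∧ ¬ ContainsIn b π τ ∧
    ∀ u v : Fin m, (u : ℕ) + 1 = m → (v : ℕ) + 2 = m → π⁻¹ u < π⁻¹ v}

/-- `|S^{↗}_Y(τ)|`: avoiders in which the value `m-1` occurs to the left of the value `m`. -/
noncomputable def SYcardTopAsc {m k : ℕ} (b : Fin m → ℕ) (τ : Equiv.Perm (Fin k)) : ℕ :=
  Nat.card {π : Equiv.Perm (Fin m) // IsTransversal b π ∧ ¬ ContainsIn b π τ ∧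
    ∀ u v : Fin m, (u : ℕ) + 1 = m → (v : ℕ) + 2 = m → π⁻¹ v < π⁻¹ u}

/-- The Young diagram `Y_n`: the square `M_n` minus its bottom-right cell. -/
def bYn (n : ℕ) : Fin n → ℕ := fun y => if (y : ℕ) = 0 then n - 1 else n

/-! ### Words avoiding 312 and Catalan numbers -/

/-- The triple `(x, y, z)` is not an occurrence of the pattern `312`. -/
def Not312 (x y z : ℕ) : Prop := ¬ (y < z ∧ z < x)

open Classical in
/-- The `312`-avoiding words whose letters are `s, s + 1, …, s + n - 1`, each used once. -/
noncomputable def avoiders (s n : ℕ) : Finset (List ℕ) :=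
  (List.range' s n).permutations.toFinset.filter (fun l => l.Triplewise Not312)

lemma mem_avoiders {s n : ℕ} {l : List ℕ} :
    l ∈ avoiders s n ↔ l.Perm (List.range' s n) ∧ l.Triplewise Not312 := by
  simp [avoiders]

/-- If every letter of `A` is below every letter of `B` and together they form an interval,
then `A` is its lower part and `B` its upper part. -/
lemma perm_range'_split {A B : List ℕ} {t p q : ℕ} (hA : A.length = p)
    (h : (A ++ B).Perm (List.range' t (p + q))) (hlt : ∀ a ∈ A, ∀ b ∈ B, a < b) :
    A.Perm (List.range' t p) ∧ B.Perm (List.range' (t + p) q) := by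
  have hs : A.mergeSort (· ≤ ·) ++ B.mergeSort (· ≤ ·) =
      List.range' t p ++ List.range' (t + p) q := by
    have e : List.range' t p ++ List.range' (t + p) q = List.range' t (p + q) := by
      simp [List.range'_append_1]
    rw [e]
    apply List.Perm.eq_of_pairwise' (r := (· ≤ ·))
    · rw [List.pairwise_append]
      refine ⟨List.pairwise_mergeSort' (r := (· ≤ ·)) A,
        List.pairwise_mergeSort' (r := (· ≤ ·)) B, ?_⟩
      intro a ha b hb
      exact (hlt a (List.mem_mergeSort.1 ha) b (List.mem_mergeSort.1 hb)).le
    · exact (List.pairwise_lt_range' (s := t) (n := p + q) 1).imp fun h => h.le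
    · exact ((List.mergeSort_perm A _).append (List.mergeSort_perm B _)).trans h
  obtain ⟨h1, h2⟩ := List.append_inj hs (by simp [hA])
  exact ⟨h1 ▸ (List.mergeSort_perm A _).symm, h2 ▸ (List.mergeSort_perm B _).symm⟩

lemma perm_range'_glue {A B : List ℕ} {t p q : ℕ} (hA : A.Perm (List.range' t p))
    (hB : B.Perm (List.range' (t + p) q)) : (A ++ B).Perm (List.range' t (p + q)) := by
  have := hA.append hB
  rwa [List.range'_append_1] at this

lemma mem_of_perm {A : List ℕ} {t p : ℕ} (hA : A.Perm (List.range' t p)) {x : ℕ} :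
    x ∈ A ↔ t ≤ x ∧ x < t + p := by
  rw [hA.mem_iff, List.mem_range'_1]

/-- Counting a set of words each of which is glued in exactly one way from a pair of words
taken from `X i` and `Y i j`, where `i + j = n`. -/
lemma card_of_glue (n : ℕ) (X : ℕ → Finset (List ℕ)) (Y : ℕ → ℕ → Finset (List ℕ))
    (f : List ℕ → List ℕ → List ℕ) (G : Finset (List ℕ))
    (hX : ∀ i j A, A ∈ X i → A ∈ X j → i = j)
    (hG : ∀ l, l ∈ G ↔ ∃ i j, i + j = n ∧ ∃ A ∈ X i, ∃ B ∈ Y i j, f A B = l)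
    (hf : ∀ i j i' j' A B A' B', A ∈ X i → B ∈ Y i j → A' ∈ X i' → B' ∈ Y i' j' →
      f A B = f A' B' → A = A' ∧ B = B') :
    G.card = ∑ ij ∈ Finset.HasAntidiagonal.antidiagonal n, (X ij.1).card * (Y ij.1 ij.2).card := by
  have : ∀ ij ∈ Finset.HasAntidiagonal.antidiagonal n, (X ij.1).card * (Y ij.1 ij.2).card =
      (X ij.1 ×ˢ Y ij.1 ij.2).card := fun ij _ => (Finset.card_product _ _).symm
  rw [Finset.sum_congr rfl this, ← Finset.card_sigma]
  symm
  refine Finset.card_bij (fun x _ => f x.2.1 x.2.2) ?_ ?_ ?_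
  · rintro ⟨⟨i, j⟩, A, B⟩ h
    simp only [Finset.mem_sigma, Finset.HasAntidiagonal.mem_antidiagonal, Finset.mem_product] at h
    exact (hG _).2 ⟨i, j, h.1, A, h.2.1, B, h.2.2, rfl⟩
  · rintro ⟨⟨i, j⟩, A, B⟩ h ⟨⟨i', j'⟩, A', B'⟩ h' e
    simp only [Finset.mem_sigma, Finset.HasAntidiagonal.mem_antidiagonal, Finset.mem_product] at h h' e
    obtain ⟨rfl, rfl⟩ := hf _ _ _ _ _ _ _ _ h.2.1 h.2.2 h'.2.1 h'.2.2 e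
    obtain rfl := hX _ _ _ h.2.1 h'.2.1
    obtain rfl : j = j' := by omega
    rfl
  · intro l hl
    obtain ⟨i, j, hij, A, hA, B, hB, e⟩ := (hG _).1 hl
    exact ⟨⟨(i, j), A, B⟩, by simp [hij, hA, hB], e⟩

lemma triplewise_middle {s : ℕ} {A B : List ℕ} (tA : A.Triplewise Not312)
    (tB : B.Triplewise Not312) (hA : ∀ a ∈ A, s < a) (hB : ∀ b ∈ B, s < b)
    (hAB : ∀ a ∈ A, ∀ b ∈ B, a < b) :
    (A ++ s :: B).Triplewise Not312 := by
  simp only [List.triplewise_append, List.triplewise_cons, List.pairwise_cons]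
  refine ⟨tA, ⟨?_, tB⟩, ?_, ?_⟩
  · refine List.pairwise_of_forall_mem_list fun x hx y hy => ?_
    have := hB y hy
    unfold Not312; omega
  · intro a ha
    refine ⟨fun b hb => ?_, List.pairwise_of_forall_mem_list fun x hx y hy => ?_⟩
    · have := hAB a ha b hb
      unfold Not312; omega
    · have := hAB a ha y hy
      unfold Not312; omega
  · intro z hz
    refine List.pairwise_of_forall_mem_list fun x hx y hy => ?_
    rcases List.mem_cons.1 hz with rfl | hz
    · have := hA y hy
      unfold Not312; omega
    · have := hAB x hx z hz
      unfold Not312; omega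

/-- Around its least letter `s`, a `312`-avoiding word splits as `A s B` with `A < B`. -/
lemma mem_avoiders_succ {s n : ℕ} {l : List ℕ} : l ∈ avoiders s (n + 1) ↔
    ∃ i j, i + j = n ∧ ∃ A ∈ avoiders (s + 1) i, ∃ B ∈ avoiders (s + 1 + i) j,
      A ++ s :: B = l := by
  simp only [mem_avoiders]
  constructor
  · rintro ⟨hp, ht⟩
    have hs : s ∈ l := (mem_of_perm hp).2 (by omega)
    obtain ⟨A, B, rfl⟩ := List.append_of_mem hs
    have hnd : (A ++ s :: B).Nodup := hp.nodup_iff.2 List.nodup_range'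
    have hAB : (A ++ B).Perm (List.range' (s + 1) n) := by
      have := List.perm_middle.symm.trans hp
      rw [List.range'_succ] at this
      exact this.cons_inv
    have hlen : A.length + B.length = n := by simpa using hAB.length_eq
    have hgt : ∀ x ∈ A ++ B, s < x := fun x hx => by
      have := (mem_of_perm hAB).1 hx; omega
    simp only [List.triplewise_append, List.triplewise_cons, List.pairwise_cons] at ht
    have hlt : ∀ a ∈ A, ∀ b ∈ B, a < b := by
      intro a ha b hb
      have h1 := (ht.2.2.1 a ha).1 b hb
      have h2 := hgt b (by simp [hb])
      have h3 : a ≠ b := by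
        rintro rfl
        exact (List.disjoint_of_nodup_append hnd) ha (by simp [hb])
      unfold Not312 at h1
      omega
    obtain ⟨h1, h2⟩ := perm_range'_split (q := B.length) rfl (hlen ▸ hAB) hlt
    exact ⟨_, _, hlen, A, ⟨h1, ht.1⟩, B, ⟨h2, ht.2.1.2⟩, rfl⟩
  · rintro ⟨i, j, rfl, A, ⟨hA, tA⟩, B, ⟨hB, tB⟩, rfl⟩
    refine ⟨?_, ?_⟩
    · rw [List.range'_succ]
      exact List.perm_middle.trans ((perm_range'_glue hA hB).cons s)
    · refine triplewise_middle tA tB ?_ ?_ ?_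
      · intro a ha
        have := (mem_of_perm hA).1 ha
        omega
      · intro b hb
        have := (mem_of_perm hB).1 hb
        omega
      · intro a ha b hb
        have := (mem_of_perm hA).1 ha
        have := (mem_of_perm hB).1 hb
        omega

/-- The length of a word determines the index `i` with `A ∈ avoiders t i`. -/
lemma index_unique (t : ℕ) (i j : ℕ) (A : List ℕ) (hi : A ∈ avoiders t i)
    (hj : A ∈ avoiders t j) : i = j := by
  have h1 := (mem_avoiders.1 hi).1.length_eq
  have h2 := (mem_avoiders.1 hj).1.length_eq
  simp at h1 h2
  omega

lemma card_avoiders (n : ℕ) : ∀ s, (avoiders s n).card = catalan n := by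
  induction n using Nat.strong_induction_on with
  | _ n ih =>
    intro s
    rcases n with _ | n
    · have : avoiders s 0 = {[]} := by
        ext l
        simp only [mem_avoiders, List.range'_zero, List.perm_nil, Finset.mem_singleton]
        exact ⟨fun h => h.1, fun h => ⟨h, h ▸ List.Triplewise.nil⟩⟩
      simp [this]
    · rw [card_of_glue n (fun i => avoiders (s + 1) i) (fun i j => avoiders (s + 1 + i) j)
        (fun A B => A ++ s :: B) _ (index_unique _) (fun l => mem_avoiders_succ), catalan_succ']
      · refine Finset.sum_congr rfl fun ij hij => ?_
        have := Finset.HasAntidiagonal.mem_antidiagonal.1 hij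
        rw [ih _ (by omega), ih _ (by omega)]
      · intro i j i' j' A B A' B' hA hB hA' hB' e
        have h1 : s ∉ A := fun h => by
          have := (mem_of_perm (mem_avoiders.1 hA).1).1 h; omega
        have h3 : s ∉ B := fun h => by
          have := (mem_of_perm (mem_avoiders.1 hB).1).1 h; omega
        obtain ⟨a, -, b⟩ := (List.append_cons_inj_of_notMem h1 h3).1 e
        exact ⟨a, b⟩

/-! ### Decomposition of the words to be counted -/

open Classical in
/-- The words of `avoiders 1 (p + 1)` whose last letter is not the largest letter `p + 1`. -/
noncomputable def avoidersLow (p : ℕ) : Finset (List ℕ) :=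
  (avoiders 1 (p + 1)) \ (avoiders 1 p).image (fun A => A ++ [p + 1])

lemma append_max_mem {p : ℕ} {A : List ℕ} :
    A ++ [p + 1] ∈ avoiders 1 (p + 1) ↔ A ∈ avoiders 1 p := by
  simp only [mem_avoiders]
  have e : List.range' 1 (p + 1) = List.range' 1 p ++ [p + 1] := by
    rw [List.range'_1_concat, Nat.add_comm]
  rw [e, List.perm_append_right_iff]
  refine and_congr_right fun hA => ?_
  simp only [List.triplewise_append, List.triplewise_singleton, List.pairwise_singleton]
  refine ⟨fun h => h.1, fun h => ⟨h, trivial, fun _ _ => trivial, ?_⟩⟩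
  intro z hz
  refine List.pairwise_of_forall_mem_list fun x hx y hy => ?_
  have := (mem_of_perm hA).1 hx
  simp only [List.mem_singleton] at hz
  unfold Not312; omega

lemma append_mem_avoidersLow {p v : ℕ} {A : List ℕ} :
    A ++ [v] ∈ avoidersLow p ↔ A ++ [v] ∈ avoiders 1 (p + 1) ∧ v ≠ p + 1 := by
  simp only [avoidersLow, Finset.mem_sdiff, Finset.mem_image]
  refine and_congr_right fun h => not_congr ⟨?_, ?_⟩
  · rintro ⟨A', -, e⟩
    have := List.append_inj' e rfl
    simpa using this.2.symm
  · rintro rfl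
    exact ⟨A, append_max_mem.1 h, rfl⟩

lemma card_avoidersLow (p : ℕ) : (avoidersLow p).card = catalan (p + 1) - catalan p := by
  rw [avoidersLow, Finset.card_sdiff_of_subset, card_avoiders, Finset.card_image_of_injective,
    card_avoiders]
  · intro A B h
    exact List.append_cancel_right h
  · intro l hl
    obtain ⟨A, hA, rfl⟩ := Finset.mem_image.1 hl
    exact append_max_mem.2 hA

/-- The words that correspond to the transversals being counted: permutations `w v` of
`0, …, m + 1`, not ending in `0`, which contain `312` but in which every
occurrence of `312` uses both the letter `0` and the last letter `v`. -/
def IsTarget (m : ℕ) (l : List ℕ) : Prop :=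
  l.Perm (List.range' 0 (m + 2)) ∧ ∃ w v, l = w ++ [v] ∧ v ≠ 0 ∧ w.Triplewise Not312 ∧
    w.Pairwise (fun x y => 0 < y → Not312 x y v) ∧ ¬ w.Pairwise (fun x y => Not312 x y v)

/-- Glues `C = A v` and `B` to `A 0 B v`. The default value of `getLastD` matters only for the
empty word `C`, which never occurs. -/
def glue (C B : List ℕ) : List ℕ := C.dropLast ++ 0 :: (B ++ [C.getLastD 0])

lemma glue_append (A B : List ℕ) (v : ℕ) : glue (A ++ [v]) B = A ++ 0 :: (B ++ [v]) := by
  simp [glue]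

lemma exists_append_of_mem_low {p : ℕ} {C : List ℕ} (h : C ∈ avoidersLow p) :
    ∃ A v, C = A ++ [v] := by
  have h1 : C ∈ avoiders 1 (p + 1) := by
    simp only [avoidersLow, Finset.mem_sdiff] at h; exact h.1
  have h2 := (mem_avoiders.1 h1).1.length_eq
  rcases List.eq_nil_or_concat C with rfl | ⟨A, v, rfl⟩
  · simp at h2
  · exact ⟨A, v, by simp⟩

/-- The words to be counted are exactly the `A 0 B v` with `A v` and `B` both `312`-avoiding,
`A v < B`, and `v` not the maximum of `A v`. -/
lemma isTarget_iff {m : ℕ} {l : List ℕ} : IsTarget m l ↔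
    ∃ i j, i + j = m ∧ ∃ C ∈ avoidersLow i, ∃ B ∈ avoiders (i + 2) j, glue C B = l := by
  constructor
  · rintro ⟨hp, w, v, rfl, hv, ht, hpw, hbad⟩
    have hnd : (w ++ [v]).Nodup := hp.nodup_iff.2 List.nodup_range'
    have h0 : 0 ∈ w := by
      have : 0 ∈ w ++ [v] := (mem_of_perm hp).2 (by omega)
      simp only [List.mem_append, List.mem_singleton] at this
      rcases this with h | h
      · exact h
      · exact absurd h.symm hv
    obtain ⟨A, B, rfl⟩ := List.append_of_mem h0
    have hperm : ((A ++ [v]) ++ B).Perm (List.range' 1 (m + 1)) := by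
      have h1 : ((A ++ 0 :: B) ++ [v]).Perm (0 :: ((A ++ [v]) ++ B)) := by
        rw [List.perm_iff_count]
        intro a
        simp only [List.count_append, List.count_cons, List.count_nil]
        omega
      have := h1.symm.trans hp
      rw [List.range'_succ] at this
      exact this.cons_inv
    have hpos : ∀ x ∈ (A ++ [v]) ++ B, 0 < x := fun x hx => by
      have := (mem_of_perm hperm).1 hx; omega
    have hnd' : ((A ++ [v]) ++ B).Nodup := hperm.nodup_iff.2 List.nodup_range'
    have hlen : (A.length + 1) + B.length = m + 1 := by
      have := hperm.length_eq
      simp at this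
      omega
    simp only [List.triplewise_append, List.triplewise_cons, List.pairwise_cons] at ht
    have hlt : ∀ a ∈ A, ∀ b ∈ B, a < b := by
      intro a ha b hb
      have h1 := (ht.2.2.1 a ha).1 b hb
      have h2 := hpos b (by simp [hb])
      have h3 : a ≠ b := by
        rintro rfl
        exact (List.disjoint_of_nodup_append hnd') (by simp [ha]) hb
      unfold Not312 at h1
      omega
    rw [List.pairwise_append, List.pairwise_cons] at hpw
    obtain ⟨hpA, ⟨-, hpB⟩, hpAB⟩ := hpw
    have hpA' : A.Pairwise (fun x y => Not312 x y v) :=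
      hpA.imp_of_mem fun {x y} _ hy h => h (hpos y (by simp [hy]))
    -- the occurrence of `312` that is present starts in `A` and has `0` as its lowest letter
    have hx : ∃ x ∈ A, v < x := by
      by_contra! hcon
      apply hbad
      rw [List.pairwise_append, List.pairwise_cons]
      refine ⟨hpA', ⟨fun y _ => by unfold Not312; omega,
        hpB.imp_of_mem fun {x y} _ hy h => h (hpos y (by simp [hy]))⟩, ?_⟩
      intro x hx y hy
      have := hcon x hx
      unfold Not312; omega
    obtain ⟨x, hxA, hvx⟩ := hx
    have hlt' : ∀ a ∈ A ++ [v], ∀ b ∈ B, a < b := by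
      intro a ha b hb
      have := hlt x hxA b hb
      simp only [List.mem_append, List.mem_singleton] at ha
      rcases ha with ha | rfl
      · exact hlt a ha b hb
      · omega
    obtain ⟨h1, h2⟩ := perm_range'_split (p := A.length + 1) (q := B.length) (by simp)
      (hlen ▸ hperm) hlt'
    refine ⟨A.length, B.length, by omega, A ++ [v], ?_, B, ?_, ?_⟩
    · rw [append_mem_avoidersLow, mem_avoiders]
      refine ⟨⟨h1, ?_⟩, ?_⟩
      · simp only [List.triplewise_append, List.triplewise_singleton, List.pairwise_singleton,
          List.mem_singleton]
        exact ⟨ht.1, trivial, fun _ _ => trivial, by rintro _ rfl; exact hpA'⟩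
      · have := (mem_of_perm (x := x) h1).1 (by simp [hxA])
        omega
    · rw [mem_avoiders]
      exact ⟨by convert h2 using 2; omega, ht.2.1.2⟩
    · simp [glue_append]
  · rintro ⟨i, j, rfl, C, hC, B, hB, rfl⟩
    obtain ⟨A, v, rfl⟩ := exists_append_of_mem_low hC
    rw [glue_append]
    obtain ⟨hC, hv⟩ := append_mem_avoidersLow.1 hC
    obtain ⟨pC, tC⟩ := mem_avoiders.1 hC
    obtain ⟨pB, tB⟩ := mem_avoiders.1 hB
    have bA : ∀ x ∈ A, 1 ≤ x ∧ x < i + 2 := fun x hx => by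
      have := (mem_of_perm (x := x) pC).1 (by simp [hx]); omega
    have bv : 1 ≤ v ∧ v < i + 1 := by
      have := (mem_of_perm (x := v) pC).1 (by simp); omega
    have bB : ∀ x ∈ B, i + 2 ≤ x := fun x hx => ((mem_of_perm pB).1 hx).1
    simp only [List.triplewise_append, List.triplewise_singleton, List.pairwise_singleton,
      List.mem_singleton, forall_eq] at tC
    refine ⟨?_, A ++ 0 :: B, v, by simp, by omega, ?_, ?_, ?_⟩
    · have h1 : (A ++ 0 :: (B ++ [v])).Perm (0 :: ((A ++ [v]) ++ B)) := by
        rw [List.perm_iff_count]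
        intro a
        simp only [List.count_append, List.count_cons, List.count_nil]
        omega
      refine h1.trans ?_
      rw [List.range'_succ]
      refine List.Perm.cons _ ?_
      have := perm_range'_glue (q := j) pC (by convert pB using 2; omega)
      convert this using 2; omega
    · refine triplewise_middle tC.1 tB (fun a ha => (bA a ha).1) (fun b hb => ?_) (fun a ha b hb => ?_)
      · have := bB b hb; omega
      · have := bB b hb
        have := bA a ha
        omega
    · rw [List.pairwise_append, List.pairwise_cons]
      refine ⟨tC.2.2.2.imp (S := fun x y => 0 < y → Not312 x y v) (fun h _ => h),
        ⟨fun y _ => by unfold Not312; omega, ?_⟩, ?_⟩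
      · refine List.pairwise_of_forall_mem_list fun x hx y hy => ?_
        have := bB y hy
        unfold Not312; omega
      · intro x hx y hy
        simp only [List.mem_cons] at hy
        rcases hy with rfl | hy
        · omega
        · have := bB y hy
          unfold Not312; omega
    -- the largest letter `i + 1` of `A v` lies in `A`, and `(i + 1, 0, v)` is a `312`
    · intro h
      have hmem : i + 1 ∈ A ++ [v] := (mem_of_perm pC).2 (by omega)
      have hA : i + 1 ∈ A := by
        simp only [List.mem_append, List.mem_singleton] at hmem
        rcases hmem with h | h
        · exact h
        · omega
      have := (List.pairwise_append.1 h).2.2 _ hA 0 (by simp)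
      unfold Not312 at this; omega

lemma catalan_le_succ (p : ℕ) : catalan p ≤ catalan (p + 1) := by
  rw [← card_avoiders p 1, ← card_avoiders (p + 1) 1]
  refine Finset.card_le_card_of_injOn (fun A => A ++ [p + 1]) ?_ ?_
  · intro A hA
    exact append_max_mem.2 hA
  · intro A _ B _ h
    exact List.append_cancel_right h

lemma sum_catalan (m : ℕ) :
    ∑ ij ∈ Finset.HasAntidiagonal.antidiagonal m,
      (catalan (ij.1 + 1) - catalan ij.1) * catalan ij.2 =
      catalan (m + 2) - 2 * catalan (m + 1) := by
  have h1 : ∑ ij ∈ Finset.HasAntidiagonal.antidiagonal m,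
      (catalan (ij.1 + 1) - catalan ij.1) * catalan ij.2 + catalan (m + 1) =
      ∑ ij ∈ Finset.HasAntidiagonal.antidiagonal m, catalan (ij.1 + 1) * catalan ij.2 := by
    rw [catalan_succ' m, ← Finset.sum_add_distrib]
    refine Finset.sum_congr rfl fun ij _ => ?_
    rw [← Nat.add_mul, Nat.sub_add_cancel (catalan_le_succ _)]
  have h2 : catalan (m + 2) = _ := catalan_succ' (m + 1)
  rw [Finset.Nat.sum_antidiagonal_succ] at h2
  simp only [catalan_zero, one_mul] at h2
  omega

open Classical in
lemma card_target (m : ℕ) :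
    ((List.range' 0 (m + 2)).permutations.toFinset.filter (IsTarget m)).card =
      catalan (m + 2) - 2 * catalan (m + 1) := by
  rw [← sum_catalan, card_of_glue m avoidersLow (fun i j => avoiders (i + 2) j) glue]
  · refine Finset.sum_congr rfl fun ij _ => ?_
    rw [card_avoidersLow, card_avoiders]
  · intro i j A hi hj
    have := index_unique 1 (i + 1) (j + 1) A (Finset.mem_sdiff.1 hi).1 (Finset.mem_sdiff.1 hj).1
    omega
  · intro l
    rw [← isTarget_iff]
    simp only [Finset.mem_filter, List.mem_toFinset, List.mem_permutations]
    exact ⟨fun h => h.2, fun h => ⟨h.1, h⟩⟩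
  · intro i j i' j' C B C' B' hC hB hC' hB' e
    obtain ⟨A, v, rfl⟩ := exists_append_of_mem_low hC
    obtain ⟨A', v', rfl⟩ := exists_append_of_mem_low hC'
    rw [glue_append, glue_append] at e
    have hC1 := (mem_avoiders.1 (append_mem_avoidersLow.1 hC).1).1
    have h1 : 0 ∉ A := fun h => by
      have := (mem_of_perm (x := 0) hC1).1 (by simp [h]); omega
    have h2 : 0 ∉ B ++ [v] := fun h => by
      rcases List.mem_append.1 h with h | h
      · have := (mem_of_perm (mem_avoiders.1 hB).1).1 h; omega
      · have := (mem_of_perm (x := 0) hC1).1 (List.mem_append_right _ h); omega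
    obtain ⟨rfl, -, h3⟩ := (List.append_cons_inj_of_notMem h1 h2).1 e
    obtain ⟨rfl, h4⟩ := List.append_inj' h3 rfl
    exact ⟨by rw [h4], rfl⟩

/-! ### From permutations to words -/

/-- The one-line notation of a permutation of `Fin n`, as a word over `ℕ`. -/
def word {n : ℕ} (π : Equiv.Perm (Fin n)) : List ℕ := List.ofFn fun i => (π i : ℕ)

lemma word_injective {n : ℕ} : Function.Injective (word (n := n)) := by
  intro π σ h
  ext i
  exact congrFun (List.ofFn_injective h) i

lemma word_perm {n : ℕ} (π : Equiv.Perm (Fin n)) : (word π).Perm (List.range' 0 n) := by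
  rw [List.perm_ext_iff_of_nodup _ List.nodup_range']
  · intro a
    simp only [word, List.mem_ofFn, List.mem_range'_1]
    constructor
    · rintro ⟨i, rfl⟩
      have := (π i).isLt
      omega
    · intro h
      exact ⟨π.symm ⟨a, by omega⟩, by simp⟩
  · rw [word, List.nodup_ofFn]
    exact Fin.val_injective.comp π.injective

lemma exists_word {n : ℕ} {l : List ℕ} (h : l.Perm (List.range' 0 n)) :
    ∃ π : Equiv.Perm (Fin n), word π = l := by
  have hlen : l.length = n := by simpa using h.length_eq
  have hnd : l.Nodup := h.nodup_iff.2 List.nodup_range'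
  subst hlen
  let g : Fin l.length → Fin l.length := fun i =>
    ⟨l.get i, by have := (mem_of_perm h).1 (l.get_mem i); omega⟩
  have hg : Function.Injective g := by
    intro i j hij
    exact hnd.injective_get (by simpa [g] using hij)
  refine ⟨Equiv.ofBijective g (Finite.injective_iff_bijective.1 hg), ?_⟩
  simp only [word, Equiv.ofBijective_apply, g]
  exact List.ofFn_get l

lemma triplewise_ofFn {n : ℕ} {f : Fin n → ℕ} {p : ℕ → ℕ → ℕ → Prop} :
    (List.ofFn f).Triplewise p ↔ ∀ i j k : Fin n, i < j → j < k → p (f i) (f j) (f k) := by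
  rw [List.triplewise_iff_getElem]
  constructor
  · intro h i j k hij hjk
    simpa using h i j k hij hjk (by simp)
  · intro h i j k hij hjk hk
    simp only [List.length_ofFn] at hk
    simpa using h ⟨i, by omega⟩ ⟨j, by omega⟩ ⟨k, hk⟩ hij hjk

/-- `IsTarget` for one-line notations, in terms of positions: the occurrences of `312` in `w v`
that lie in `w` and those that end in `v` are treated together. -/
lemma isTarget_word {m : ℕ} (π : Equiv.Perm (Fin (m + 2))) : IsTarget m (word π) ↔
    π (Fin.last _) ≠ 0 ∧
    (∀ i j k : Fin (m + 2), i < j → j < k → π j < π k → π k < π i →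
      π j = 0 ∧ k = Fin.last _) ∧
    ∃ i j k : Fin (m + 2), i < j ∧ j < k ∧ π j < π k ∧ π k < π i := by
  have hw : word π = List.ofFn (fun i : Fin (m + 1) => (π i.castSucc : ℕ)) ++
      [(π (Fin.last _) : ℕ)] := by
    rw [word, List.ofFn_succ', List.concat_eq_append]
  have h1 : IsTarget m (word π) ↔ (π (Fin.last _) : ℕ) ≠ 0 ∧
      (List.ofFn (fun i : Fin (m + 1) => (π i.castSucc : ℕ))).Triplewise Not312 ∧
      (List.ofFn (fun i : Fin (m + 1) => (π i.castSucc : ℕ))).Pairwise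
        (fun x y => 0 < y → Not312 x y (π (Fin.last _) : ℕ)) ∧
      ¬ (List.ofFn (fun i : Fin (m + 1) => (π i.castSucc : ℕ))).Pairwise
        (fun x y => Not312 x y (π (Fin.last _) : ℕ)) := by
    constructor
    · rintro ⟨-, w, v, e, h⟩
      obtain ⟨rfl, e2⟩ := List.append_inj' (hw.symm.trans e) rfl
      obtain rfl : _ = v := by simpa using e2
      exact h
    · intro h
      exact ⟨word_perm π, _, _, hw, h⟩
  rw [h1, triplewise_ofFn, List.pairwise_ofFn, List.pairwise_ofFn]
  simp only [Not312, ← Fin.lt_def]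
  have h0 : ∀ x : Fin (m + 2), (x : ℕ) ≠ 0 ↔ x ≠ 0 := fun x => by
    rw [ne_eq, ne_eq, Fin.ext_iff]; rfl
  rw [h0]
  refine and_congr_right fun hl => ?_
  constructor
  · rintro ⟨ht, hp, hn⟩
    refine ⟨?_, ?_⟩
    · intro i j k hij hjk h2 h3
      obtain ⟨i, rfl⟩ := Fin.exists_castSucc_eq.2 (hij.trans_le (hjk.le.trans (Fin.le_last k))).ne
      obtain ⟨j, rfl⟩ := Fin.exists_castSucc_eq.2 (hjk.trans_le (Fin.le_last k)).ne
      rcases Fin.eq_castSucc_or_eq_last k with ⟨k, rfl⟩ | rfl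
      · exact absurd ⟨h2, h3⟩ (ht i j k hij hjk)
      · refine ⟨?_, rfl⟩
        by_contra hne
        exact hp hij (Nat.pos_of_ne_zero ((h0 _).2 hne)) ⟨h2, h3⟩
    · push Not at hn
      obtain ⟨i, j, hij, h2, h3⟩ := hn
      exact ⟨_, _, _, hij, Fin.castSucc_lt_last j, h2, h3⟩
  · rintro ⟨ha, i, j, k, hij, hjk, h2, h3⟩
    refine ⟨?_, ?_, ?_⟩
    · rintro i j k hij hjk ⟨h2, h3⟩
      exact (Fin.castSucc_lt_last k).ne (ha _ _ _ hij hjk h2 h3).2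
    · rintro i j hij hpos ⟨h2, h3⟩
      exact (h0 _).1 hpos.ne' (ha _ _ _ hij (Fin.castSucc_lt_last j) h2 h3).1
    · intro h
      obtain ⟨-, rfl⟩ := ha i j k hij hjk h2 h3
      obtain ⟨j, rfl⟩ := Fin.exists_castSucc_eq.2 hjk.ne
      obtain ⟨i, rfl⟩ := Fin.exists_castSucc_eq.2 (hij.trans hjk).ne
      exact h hij ⟨h2, h3⟩

lemma isTransversal_iff {m : ℕ} (π : Equiv.Perm (Fin (m + 2))) :
    IsTransversal (bYn (m + 2)) π ↔ π (Fin.last _) ≠ 0 := by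
  simp only [IsTransversal, bYn]
  constructor
  · intro h e
    have := h (Fin.last _)
    simp [e] at this
  · intro h i
    split_ifs with h0
    · have : i ≠ Fin.last _ := by
        rintro rfl
        exact h (Fin.ext h0)
      have := Fin.val_lt_last this
      omega
    · exact i.isLt

/-- Inside `Y_n`, an occurrence of `312` is lost exactly when its lowest letter is `0` and
its last column is the last one, since its submatrix then covers the deleted corner. -/
lemma not_containsIn_iff {m : ℕ} (π : Equiv.Perm (Fin (m + 2))) :
    ¬ ContainsIn (bYn (m + 2)) π p312 ↔
      ∀ i j k : Fin (m + 2), i < j → j < k → π j < π k → π k < π i →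
        π j = 0 ∧ k = Fin.last _ := by
  constructor
  · intro h i j k hij hjk h1 h2
    by_contra hcon
    apply h
    refine ⟨![i, j, k], ?_, ?_, ?_⟩
    · rw [Fin.strictMono_iff_lt_succ]
      intro a
      fin_cases a
      · exact hij
      · exact hjk
    · have h3 := h1.trans h2
      intro s t
      fin_cases s <;> fin_cases t <;>
        simp [p312, h1, h2, h3, h1.le, h2.le, h3.le]
    · have key : ∀ a c : Fin (m + 2), a ≤ k → π j ≤ π c →
          (a : ℕ) + 1 ≤ bYn (m + 2) (π c) := by
        intro a c ha hc
        simp only [bYn]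
        split_ifs with h0
        · have hj : π j = 0 := by
            apply Fin.ext
            have : (π j : ℕ) ≤ (π c : ℕ) := hc
            simp only [Fin.val_zero]; omega
          have hk : k ≠ Fin.last _ := fun e => hcon ⟨hj, e⟩
          have := Fin.val_lt_last hk
          have : (a : ℕ) ≤ k := ha
          omega
        · exact a.isLt
      have ha : ∀ s : Fin 3, (![i, j, k] : Fin 3 → Fin (m + 2)) s ≤ k := by
        intro s
        fin_cases s
        · exact (hij.trans hjk).le
        · exact hjk.le
        · exact le_rfl
      have hc : ∀ s : Fin 3, π j ≤ π ((![i, j, k] : Fin 3 → Fin (m + 2)) s) := by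
        intro s
        fin_cases s
        · exact (h1.trans h2).le
        · exact le_rfl
        · exact h1.le
      exact fun s t => key _ _ (ha s) (hc t)
  · rintro h ⟨f, hf, ho, hb⟩
    obtain ⟨h0, hl⟩ := h (f 0) (f 1) (f 2) (hf (by decide)) (hf (by decide))
      ((ho 1 2).1 (by decide)) ((ho 2 0).1 (by decide))
    have := hb 2 1
    rw [h0, hl] at this
    simp [bYn] at this

theorem stmt18 (n : ℕ) (hn : 2 ≤ n) :
    Nat.card {π : Equiv.Perm (Fin n) // IsTransversal (bYn n) π ∧
        ¬ ContainsIn (bYn n) π p312 ∧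
        ∃ i₁ i₂ i₃ : Fin n, i₁ < i₂ ∧ i₂ < i₃ ∧ π i₂ < π i₃ ∧ π i₃ < π i₁} =
      catalan n - 2 * catalan (n - 1) := by
  classical
  obtain ⟨m, rfl⟩ := Nat.exists_eq_add_of_le' hn
  have hQ : ∀ π : Equiv.Perm (Fin (m + 2)), (IsTransversal (bYn (m + 2)) π ∧
      ¬ ContainsIn (bYn (m + 2)) π p312 ∧
      ∃ i₁ i₂ i₃ : Fin (m + 2), i₁ < i₂ ∧ i₂ < i₃ ∧ π i₂ < π i₃ ∧ π i₃ < π i₁) ↔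
      IsTarget m (word π) := by
    intro π
    rw [isTarget_word, isTransversal_iff, not_containsIn_iff]
  rw [Nat.card_congr (Equiv.subtypeEquivRight hQ), Nat.card_eq_fintype_card, Fintype.card_subtype]
  refine Eq.trans ?_ (card_target m)
  refine Finset.card_bij (fun π _ => word π) ?_ ?_ ?_
  · intro π hπ
    simpa using ⟨word_perm π, by simpa using hπ⟩
  · intro π _ σ _ h
    exact word_injective h
  · intro l hl
    simp only [Finset.mem_filter, List.mem_toFinset, List.mem_permutations] at hl
    obtain ⟨π, rfl⟩ := exists_word hl.1
    exact ⟨π, by simpa using hl.2, rfl⟩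
end

section
/- For every n ≥ 3, |S_{St³_n}(213)| = 2^{n−3}·(n+2); and for every n ≥ 1, |S_{St³_n}(123)| = |S_{St³_n}(312)| = f_{2n−1}. -/
/-!
Everything rests on removing the lowest dot. In `St³_n` the lowest row has three cells, and
inserting a new lowest dot in one of the first three columns of a transversal of `St³_{n-1}` gives
every transversal of `St³_n` exactly once (`ins_bijective`, `isTransversal_ins`). An occurrence of
a pattern of length three that uses the lowest dot lies inside the diagram only if it occupies
exactly the first three columns, while the occurrences that do not use it correspond to those in
the smaller transversal (`containsIn_ins`). Hence whether an insertion creates the pattern depends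
only on the order of the first two entries of the smaller transversal.

Counting avoiders of `St³_n` that start with an ascent (`A`) or a descent (`D`) separately gives,
for the next size,

* `213`: `A' = 2A + D`, `D' = 2D`;
* `123`: `A' = A + D`, `D' = A + 2D`;
* `312`: `A' = 2A + D`, `D' = A + D`;

with `A = D = 1` for `n = 2`. The first system solves to `D = 2^{n-2}`, `2A = 2^{n-2} n`, the other
two to pairs of consecutive Fibonacci numbers.
-/

open Equiv

/-- The staircase `St³_n`: `b(y) = min (y+2) n` (1-indexed heights). -/
def bSt3 (n : ℕ) : Fin n → ℕ := fun y => min ((y : ℕ) + 3) n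

lemma succ_le_bSt3 {n : ℕ} (i y : Fin n) : (i : ℕ) + 1 ≤ bSt3 n y ↔ (i : ℕ) ≤ y + 2 := by
  unfold bSt3
  omega

/-- `π` is a transversal of `St³_n` that avoids `τ` there. -/
def Good {n : ℕ} (τ : Equiv.Perm (Fin 3)) (π : Equiv.Perm (Fin n)) : Prop :=
  IsTransversal (bSt3 n) π ∧ ¬ ContainsIn (bSt3 n) π τ

/-! ### Inserting the lowest dot -/

/-- The permutation obtained from `σ` by inserting a new lowest dot in column `p`. -/
def ins {n : ℕ} (p : Fin (n + 1)) (σ : Equiv.Perm (Fin n)) : Equiv.Perm (Fin (n + 1)) :=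
  (finSuccEquiv' p).trans ((Equiv.optionCongr σ).trans (finSuccEquiv' 0).symm)

lemma ins_self {n : ℕ} (p : Fin (n + 1)) (σ : Equiv.Perm (Fin n)) : ins p σ p = 0 := by
  simp [ins]

lemma ins_succAbove {n : ℕ} (p : Fin (n + 1)) (σ : Equiv.Perm (Fin n)) (i : Fin n) :
    ins p σ (p.succAbove i) = (σ i).succ := by
  simp [ins]

lemma ins_bijective (n : ℕ) :
    Function.Bijective (fun x : Fin (n + 1) × Equiv.Perm (Fin n) => ins x.1 x.2) := by
  -- Injectivity plus the equality `(n + 1)! = (n + 1) * n!` of cardinalities.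
  rw [Fintype.bijective_iff_injective_and_card]
  refine ⟨?_, ?_⟩
  · rintro ⟨p, σ⟩ ⟨q, ρ⟩ h
    simp only at h
    have hpq : p = q := by
      apply (ins q ρ).injective
      rw [ins_self, ← h, ins_self]
    subst hpq
    congr 1
    ext i
    have := ins_succAbove p σ i
    rw [h, ins_succAbove] at this
    rw [Fin.succ_injective _ this]
  · simp [Fintype.card_perm, Nat.factorial_succ]

lemma card_eq_sum_ins {n : ℕ} (P : Equiv.Perm (Fin (n + 1)) → Prop) :
    Nat.card {π // P π} = ∑ p : Fin (n + 1), Nat.card {σ // P (ins p σ)} := by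
  rw [← Nat.card_sigma]
  symm
  apply Nat.card_congr
  refine Equiv.trans ?_ ((Equiv.ofBijective _ (ins_bijective n)).subtypeEquiv
    (p := fun x => P (ins x.1 x.2)) (q := P) (fun _ => Iff.rfl))
  exact
    { toFun := fun x => ⟨(x.1, x.2.1), x.2.2⟩
      invFun := fun y => ⟨y.1.1, ⟨y.1.2, y.2⟩⟩
      left_inv := fun _ => rfl
      right_inv := fun _ => rfl }

lemma isTransversal_ins {n : ℕ} (p : Fin (n + 3)) (σ : Equiv.Perm (Fin (n + 2))) :
    IsTransversal (bSt3 (n + 3)) (ins p σ) ↔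
      (p : ℕ) ≤ 2 ∧ IsTransversal (bSt3 (n + 2)) σ := by
  unfold IsTransversal
  simp only [succ_le_bSt3]
  constructor
  · intro h
    have hp : (p : ℕ) ≤ 2 := by simpa [ins_self] using h p
    refine ⟨hp, fun i => ?_⟩
    have := h (p.succAbove i)
    rw [ins_succAbove, Fin.val_succ] at this
    rcases lt_or_ge (i : ℕ) (p : ℕ) with hi | hi
    · omega
    · rw [Fin.succAbove_of_le_castSucc _ _ (by simpa [Fin.le_def] using hi), Fin.val_succ] at this
      omega
  · rintro ⟨hp, h⟩ j
    rcases Fin.eq_self_or_eq_succAbove p j with rfl | ⟨i, rfl⟩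
    · simpa [ins_self] using hp
    · rw [ins_succAbove, Fin.val_succ]
      have h1 := h i
      have h2 : (p.succAbove i : ℕ) ≤ i + 1 := by
        unfold Fin.succAbove
        split <;> simp
      omega

/-- The first three columns of `π` form the pattern `τ`. -/
def Leading {n : ℕ} (τ : Equiv.Perm (Fin 3)) (π : Equiv.Perm (Fin (n + 3))) : Prop :=
  ∀ s t : Fin 3, τ s < τ t ↔
    π (Fin.castLE (Nat.le_add_left 3 n) s) < π (Fin.castLE (Nat.le_add_left 3 n) t)

/-- A new occurrence of a pattern uses the lowest dot, so it fits in the diagram only in the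
first three columns; the other occurrences are those already present before the insertion. -/
lemma containsIn_ins {n : ℕ} (τ : Equiv.Perm (Fin 3)) (p : Fin (n + 3)) (hp : (p : ℕ) ≤ 2)
    (σ : Equiv.Perm (Fin (n + 2))) :
    ContainsIn (bSt3 (n + 3)) (ins p σ) τ ↔
      ContainsIn (bSt3 (n + 2)) σ τ ∨ Leading τ (ins p σ) := by
  unfold ContainsIn
  simp only [succ_le_bSt3]
  constructor
  · rintro ⟨f, hf, ho, hb⟩
    have h01 : (f 0 : ℕ) < f 1 := hf (by decide)
    have h12 : (f 1 : ℕ) < f 2 := hf (by decide)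
    by_cases hpf : ∃ t, f t = p
    · right
      obtain ⟨t, rfl⟩ := hpf
      have h2 : (f 2 : ℕ) ≤ 2 := by simpa [ins_self] using hb 2 t
      have hfe : ∀ s : Fin 3, f s = Fin.castLE (Nat.le_add_left 3 n) s := by
        intro s
        apply Fin.ext
        fin_cases s
        · change (f 0 : ℕ) = 0
          omega
        · change (f 1 : ℕ) = 1
          omega
        · change (f 2 : ℕ) = 2
          omega
      intro s u
      rw [ho, ← hfe, ← hfe]
    · left
      push Not at hpf
      have hg : ∀ s, ∃ i, f s = p.succAbove i := fun s =>
        (Fin.eq_self_or_eq_succAbove p (f s)).resolve_left (hpf s)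
      choose g hg using hg
      have hgm : StrictMono g := fun s t hst =>
        (Fin.strictMono_succAbove p).lt_iff_lt.1 (by rw [← hg, ← hg]; exact hf hst)
      refine ⟨g, hgm, fun s t => ?_, fun s t => ?_⟩
      · rw [ho, hg, hg, ins_succAbove, ins_succAbove, Fin.succ_lt_succ_iff]
      · have g01 : (g 0 : ℕ) < g 1 := hgm (by decide)
        have g12 : (g 1 : ℕ) < g 2 := hgm (by decide)
        have gs : (g s : ℕ) ≤ g 2 := hgm.monotone (Fin.le_last s)
        have := hb 2 t
        -- The last column of the occurrence is at least `2 ≥ p`, hence is shifted.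
        rw [hg, hg, ins_succAbove, Fin.val_succ,
          Fin.succAbove_of_le_castSucc _ _ (by rw [Fin.le_def, Fin.val_castSucc]; omega),
          Fin.val_succ] at this
        omega
  · rintro (⟨f, hf, ho, hb⟩ | h)
    · refine ⟨fun s => p.succAbove (f s), (Fin.strictMono_succAbove p).comp hf,
        fun s t => ?_, fun s t => ?_⟩
      · rw [ho, ins_succAbove, ins_succAbove, Fin.succ_lt_succ_iff]
      · simp only [ins_succAbove, Fin.val_succ]
        have h1 := hb s t
        have h2 : (p.succAbove (f s) : ℕ) ≤ f s + 1 := by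
          unfold Fin.succAbove
          split <;> simp
        omega
    · refine ⟨Fin.castLE (Nat.le_add_left 3 n), fun s t hst => hst, h, fun s t => ?_⟩
      simp only [Fin.val_castLE]
      omega

lemma good_ins {n : ℕ} (τ : Equiv.Perm (Fin 3)) (p : Fin (n + 3))
    (σ : Equiv.Perm (Fin (n + 2))) :
    Good τ (ins p σ) ↔ (p : ℕ) ≤ 2 ∧ Good τ σ ∧ ¬ Leading τ (ins p σ) := by
  unfold Good
  rw [isTransversal_ins]
  by_cases hp : (p : ℕ) ≤ 2
  · rw [containsIn_ins τ p hp]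
    tauto
  · tauto

/-! ### Refinement by the order of the first two entries -/

/-- The number of `τ`-avoiding transversals of `St³_{n+2}` starting with an ascent. -/
noncomputable def ascCard (τ : Equiv.Perm (Fin 3)) (n : ℕ) : ℕ :=
  Nat.card {π : Equiv.Perm (Fin (n + 2)) // Good τ π ∧ π 0 < π 1}

/-- The number of `τ`-avoiding transversals of `St³_{n+2}` starting with a descent. -/
noncomputable def descCard (τ : Equiv.Perm (Fin 3)) (n : ℕ) : ℕ :=
  Nat.card {π : Equiv.Perm (Fin (n + 2)) // Good τ π ∧ ¬ π 0 < π 1}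

lemma card_split {α : Type*} [Finite α] (P Q : α → Prop) :
    Nat.card {x // P x} = Nat.card {x // P x ∧ Q x} + Nat.card {x // P x ∧ ¬ Q x} := by
  classical
  have := Fintype.ofFinite α
  simp only [Nat.card_eq_fintype_card, Fintype.card_subtype]
  rw [← Finset.filter_filter, ← Finset.filter_filter, Finset.card_filter_add_card_filter_not]

lemma SYcard_eq_add (τ : Equiv.Perm (Fin 3)) (n : ℕ) :
    SYcard (bSt3 (n + 2)) τ = ascCard τ n + descCard τ n :=
  card_split (Good τ) _

/-- Sorting avoiders by the column of their lowest dot, which is one of the first three. -/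
lemma card_step {n : ℕ} (τ : Equiv.Perm (Fin 3)) (Q : Equiv.Perm (Fin (n + 3)) → Prop) :
    Nat.card {π // Good τ π ∧ Q π} =
      Nat.card {σ // Good τ σ ∧ ¬ Leading τ (ins 0 σ) ∧ Q (ins 0 σ)} +
      Nat.card {σ // Good τ σ ∧ ¬ Leading τ (ins 1 σ) ∧ Q (ins 1 σ)} +
      Nat.card {σ // Good τ σ ∧ ¬ Leading τ (ins 2 σ) ∧ Q (ins 2 σ)} := by
  rw [card_eq_sum_ins, Fin.sum_univ_succ, Fin.sum_univ_succ, Fin.sum_univ_succ]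
  have hz : ∀ i : Fin n, Nat.card {σ // Good τ (ins i.succ.succ.succ σ) ∧
      Q (ins i.succ.succ.succ σ)} = 0 := by
    intro i
    rw [Nat.card_eq_zero]
    left
    refine ⟨fun ⟨σ, h, _⟩ => ?_⟩
    rw [good_ins] at h
    have := h.1
    simp only [Fin.val_succ] at this
    omega
  have key : ∀ p : Fin (n + 3), (p : ℕ) ≤ 2 →
      Nat.card {σ // Good τ (ins p σ) ∧ Q (ins p σ)} =
      Nat.card {σ // Good τ σ ∧ ¬ Leading τ (ins p σ) ∧ Q (ins p σ)} := by
    intro p hp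
    apply Nat.card_congr
    apply Equiv.subtypeEquivRight
    intro σ
    rw [good_ins]
    tauto
  rw [Finset.sum_eq_zero (fun i _ => hz i), key _ (Nat.zero_le 2),
    key _ (show 1 ≤ 2 by decide), key _ (show 2 ≤ 2 from le_rfl)]
  simp only [add_zero, add_assoc]
  rfl

section FirstEntries

variable {n : ℕ} (σ : Equiv.Perm (Fin (n + 2)))

lemma ins0_0 : ins 0 σ 0 = 0 := ins_self 0 σ
lemma ins0_1 : ins 0 σ 1 = (σ 0).succ := ins_succAbove 0 σ 0
lemma ins0_2 : ins 0 σ 2 = (σ 1).succ := ins_succAbove 0 σ 1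
lemma ins1_0 : ins 1 σ 0 = (σ 0).succ := ins_succAbove 1 σ 0
lemma ins1_1 : ins 1 σ 1 = 0 := ins_self 1 σ
lemma ins1_2 : ins 1 σ 2 = (σ 1).succ := ins_succAbove 1 σ 1
lemma ins2_0 : ins 2 σ 0 = (σ 0).succ := ins_succAbove 2 σ 0
lemma ins2_1 : ins 2 σ 1 = (σ 1).succ := ins_succAbove 2 σ 1
lemma ins2_2 : ins 2 σ 2 = 0 := ins_self 2 σ

/-- The order of three distinct entries is determined by the three increasing index pairs. -/
lemma leading_iff (τ : Equiv.Perm (Fin 3)) (π : Equiv.Perm (Fin (n + 3))) :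
    Leading τ π ↔ (τ 0 < τ 1 ↔ π 0 < π 1) ∧ (τ 0 < τ 2 ↔ π 0 < π 2) ∧
      (τ 1 < τ 2 ↔ π 1 < π 2) := by
  have e0 : Fin.castLE (Nat.le_add_left 3 n) 0 = 0 := rfl
  have e1 : Fin.castLE (Nat.le_add_left 3 n) 1 = 1 := rfl
  have e2 : Fin.castLE (Nat.le_add_left 3 n) 2 = 2 := rfl
  have t01 : τ 0 ≠ τ 1 := τ.injective.ne (by decide)
  have t02 : τ 0 ≠ τ 2 := τ.injective.ne (by decide)
  have t12 : τ 1 ≠ τ 2 := τ.injective.ne (by decide)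
  have p01 : π 0 ≠ π 1 := π.injective.ne (by simp)
  have p02 : π 0 ≠ π 2 := π.injective.ne (by rw [← e0, ← e2]; simp [Fin.ext_iff])
  have p12 : π 1 ≠ π 2 := π.injective.ne (by rw [← e1, ← e2]; simp [Fin.ext_iff])
  simp only [Leading, Fin.forall_fin_succ, IsEmpty.forall_iff, and_true]
  simp only [Fin.succ_zero_eq_one, Fin.succ_one_eq_two, e0, e1, e2, lt_irrefl, true_and, and_true]
  grind

end FirstEntries

lemma p123_vals : (p123 0 < p123 1) ∧ (p123 0 < p123 2) ∧ (p123 1 < p123 2) := by decide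
lemma p213_vals : ¬ (p213 0 < p213 1) ∧ (p213 0 < p213 2) ∧ (p213 1 < p213 2) := by decide
lemma p312_vals : ¬ (p312 0 < p312 1) ∧ ¬ (p312 0 < p312 2) ∧ (p312 1 < p312 2) := by decide

/-! ### The recurrences

If `σ` starts with `a, b`, the three insertions start with `0 a b`, `a 0 b` and `a b 0`. So the
forbidden insertions are: the middle one when `a < b` for `213`, the first one when `a < b` for
`123`, and the middle one when `a > b` for `312`. -/

lemma ascCard_213 (n : ℕ) : ascCard p213 (n + 1) = 2 * ascCard p213 n + descCard p213 n := by
  have h := card_split (Good (n := n + 2) p213) (fun σ => σ 0 < σ 1)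
  unfold ascCard descCard
  rw [card_step]
  simp [leading_iff, ins0_0, ins0_1, ins0_2, ins1_0, ins1_1, ins1_2, ins2_0, ins2_1, ins2_2,
    p213_vals]
  simp at h
  omega

lemma descCard_213 (n : ℕ) : descCard p213 (n + 1) = 2 * descCard p213 n := by
  unfold descCard
  rw [card_step]
  simp [leading_iff, ins0_0, ins0_1, ins0_2, ins1_0, ins1_1, ins1_2, ins2_0, ins2_1, ins2_2,
    p213_vals]
  omega

lemma ascCard_123 (n : ℕ) : ascCard p123 (n + 1) = ascCard p123 n + descCard p123 n := by
  unfold ascCard descCard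
  rw [card_step]
  simp [leading_iff, ins0_0, ins0_1, ins0_2, ins1_0, ins1_1, ins1_2, ins2_0, ins2_1, ins2_2,
    p123_vals]
  omega

lemma descCard_123 (n : ℕ) : descCard p123 (n + 1) = ascCard p123 n + 2 * descCard p123 n := by
  have h := card_split (Good (n := n + 2) p123) (fun σ => σ 0 < σ 1)
  unfold ascCard descCard
  rw [card_step]
  simp [leading_iff, ins0_0, ins0_1, ins0_2, ins1_0, ins1_1, ins1_2, ins2_0, ins2_1, ins2_2,
    p123_vals]
  simp at h
  omega

lemma ascCard_312 (n : ℕ) : ascCard p312 (n + 1) = 2 * ascCard p312 n + descCard p312 n := by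
  have h := card_split (Good (n := n + 2) p312) (fun σ => σ 0 < σ 1)
  unfold ascCard descCard
  rw [card_step]
  simp [leading_iff, ins0_0, ins0_1, ins0_2, ins1_0, ins1_1, ins1_2, ins2_0, ins2_1, ins2_2,
    p312_vals]
  simp at h
  omega

lemma descCard_312 (n : ℕ) : descCard p312 (n + 1) = ascCard p312 n + descCard p312 n := by
  unfold ascCard descCard
  rw [card_step]
  simp [leading_iff, ins0_0, ins0_1, ins0_2, ins1_0, ins1_1, ins1_2, ins2_0, ins2_1, ins2_2,
    p312_vals]

/-! ### Initial values and closed forms -/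

lemma good_of_le_two {n : ℕ} (hn : n ≤ 2) (τ : Equiv.Perm (Fin 3)) (π : Equiv.Perm (Fin n)) :
    Good τ π := by
  refine ⟨fun i => ?_, ?_⟩
  · rw [succ_le_bSt3]
    omega
  · rintro ⟨f, hf, _⟩
    have := Fintype.card_le_of_injective f hf.injective
    simp at this
    omega

lemma ascCard_zero (τ : Equiv.Perm (Fin 3)) : ascCard τ 0 = 1 := by
  simp only [ascCard, good_of_le_two le_rfl, true_and]
  rw [Nat.card_eq_fintype_card]
  decide

lemma descCard_zero (τ : Equiv.Perm (Fin 3)) : descCard τ 0 = 1 := by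
  simp only [descCard, good_of_le_two le_rfl, true_and]
  rw [Nat.card_eq_fintype_card]
  decide

lemma SYcard_one (τ : Equiv.Perm (Fin 3)) : SYcard (bSt3 1) τ = 1 := by
  change Nat.card {π : Equiv.Perm (Fin 1) // Good τ π} = 1
  simp [good_of_le_two (n := 1) (by norm_num)]

lemma closed_213 (n : ℕ) : descCard p213 n = 2 ^ n ∧ 2 * ascCard p213 n = 2 ^ n * (n + 2) := by
  induction n with
  | zero => simp [ascCard_zero, descCard_zero]
  | succ n ih =>
    obtain ⟨h1, h2⟩ := ih
    rw [ascCard_213, descCard_213, h1]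
    refine ⟨by ring, ?_⟩
    rw [mul_add, h2]
    ring

lemma closed_123 (n : ℕ) :
    ascCard p123 n = Nat.fib (2 * n + 1) ∧ descCard p123 n = Nat.fib (2 * n + 2) := by
  induction n with
  | zero => simp [ascCard_zero, descCard_zero]
  | succ n ih =>
    have e1 : Nat.fib (2 * n + 3) = Nat.fib (2 * n + 1) + Nat.fib (2 * n + 2) := Nat.fib_add_two
    have e2 : Nat.fib (2 * n + 4) = Nat.fib (2 * n + 2) + Nat.fib (2 * n + 3) := Nat.fib_add_two
    rw [ascCard_123, descCard_123, ih.1, ih.2]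
    refine ⟨e1.symm, ?_⟩
    rw [show 2 * (n + 1) + 2 = 2 * n + 4 by ring]
    omega

lemma closed_312 (n : ℕ) :
    ascCard p312 n = Nat.fib (2 * n + 2) ∧ descCard p312 n = Nat.fib (2 * n + 1) := by
  induction n with
  | zero => simp [ascCard_zero, descCard_zero]
  | succ n ih =>
    have e1 : Nat.fib (2 * n + 3) = Nat.fib (2 * n + 1) + Nat.fib (2 * n + 2) := Nat.fib_add_two
    have e2 : Nat.fib (2 * n + 4) = Nat.fib (2 * n + 2) + Nat.fib (2 * n + 3) := Nat.fib_add_two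
    rw [ascCard_312, descCard_312, ih.1, ih.2]
    rw [show 2 * (n + 1) + 2 = 2 * n + 4 by ring, show 2 * (n + 1) + 1 = 2 * n + 3 by ring]
    omega

theorem stmt19 :
    (∀ n : ℕ, 3 ≤ n → SYcard (bSt3 n) p213 = 2 ^ (n - 3) * (n + 2)) ∧
    (∀ n : ℕ, 1 ≤ n →
      SYcard (bSt3 n) p123 = Nat.fib (2 * n - 1) ∧
      SYcard (bSt3 n) p312 = Nat.fib (2 * n - 1)) := by
  refine ⟨fun n hn => ?_, fun n hn => ?_⟩
  · obtain ⟨m, rfl⟩ := Nat.exists_eq_add_of_le' hn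
    obtain ⟨h1, h2⟩ := closed_213 (m + 1)
    rw [SYcard_eq_add p213 (m + 1), h1, Nat.add_sub_cancel]
    -- `2 * ascCard` is known, so the identity is compared after doubling.
    apply Nat.eq_of_mul_eq_mul_left two_pos
    rw [mul_add, h2]
    ring
  · obtain ⟨m, rfl⟩ := Nat.exists_eq_add_of_le' hn
    rcases m with _ | m
    · simp [SYcard_one]
    · have e : Nat.fib (2 * (m + 1 + 1) - 1) = Nat.fib (2 * m + 1) + Nat.fib (2 * m + 2) := by
        rw [show 2 * (m + 1 + 1) - 1 = 2 * m + 1 + 2 by omega, Nat.fib_add_two]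
      rw [SYcard_eq_add p123 m, SYcard_eq_add p312 m, (closed_123 m).1, (closed_123 m).2,
        (closed_312 m).1, (closed_312 m).2, e]
      exact ⟨rfl, add_comm _ _⟩
end
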